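/- Let A ∈ GL(Γ) with characteristic polynomial χ_A irreducible over ℚ, having r real eigenvalues and 2c non-real complex eigenvalues (r + 2c = dim V). Then the centralizer of A in GL(Γ) is an abelian group isomorphic to F × ℤ^{r+c-1} for some finite group F. -/

import Mathlib

open Module Polynomial NumberField

/-! Let `K = ℚ[X]/(χ_A)`. Acting on `ℚⁿ` through `X ↦ A`, the field `K` makes `ℚⁿ` a one-dimensional
`K`-vector space, so the matrices commuting with `A` are exactly those in `ℚ[A] ≅ K`, and the
integral ones form an order `R` of `K`, whose unit group is the centralizer of `A` in `GL(n, ℤ)`.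
Since `R` has finite additive index `N` in `𝓞 K`, it contains the ideal `N 𝓞 K`; a unit of `𝓞 K`
congruent to `1` modulo `N` is therefore a unit of `R`, so `Rˣ` has finite index in `(𝓞 K)ˣ`.
Dirichlet's unit theorem gives its rank `r + c - 1`, where the real places of `K` are counted by the
real roots of `χ_A`. -/

theorem nonempty_linearEquiv_torsion_prod (R M : Type*) [CommRing R] [IsDomain R]
    [IsPrincipalIdealRing R] [AddCommGroup M] [Module R M] [Module.Finite R M] :
    Nonempty (M ≃ₗ[R] Submodule.torsion R M × (Fin (finrank R M) → R)) := by
  let T := Submodule.torsion R M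
  obtain ⟨lift, mkQ_comp_lift⟩ :=
    projective_lifting_property T.mkQ LinearMap.id T.mkQ_surjective
  have exact_at : LinearMap.range T.subtype = LinearMap.ker T.mkQ := by
    rw [T.range_subtype, T.ker_mkQ]
  have basis : Basis (Fin (finrank R M)) R (M ⧸ T) :=
    finBasisOfFinrankEq R (M ⧸ T) (finrank_quotient_eq_of_le_torsion le_rfl)
  exact ⟨(lequivProdOfRightSplitExact T.injective_subtype exact_at mkQ_comp_lift).symm ≪≫ₗ
    (LinearEquiv.refl R T).prodCongr basis.equivFun⟩

universe u

theorem exists_mulEquiv_finite_prod (G : Type u) [CommGroup G] [Module.Finite ℤ (Additive G)] :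
    ∃ (F : Type u) (_ : CommGroup F) (_ : Fintype F),
      Nonempty (G ≃* F × Multiplicative (Fin (finrank ℤ (Additive G)) → ℤ)) := by
  let T := Submodule.torsion ℤ (Additive G)
  have : Finite T := Module.finite_of_fg_torsion T (Submodule.torsion_isTorsion)
  obtain ⟨e⟩ := nonempty_linearEquiv_torsion_prod ℤ (Additive G)
  exact ⟨Multiplicative T, inferInstance, Fintype.ofFinite _,
    ⟨(AddEquiv.toMultiplicativeRight e.toAddEquiv).trans (MulEquiv.prodMultiplicative T _)⟩⟩

theorem finrank_additive_eq_of_finiteIndex_range {G H : Type*} [CommGroup G] [CommGroup H]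
    [Module.Finite ℤ (Additive H)] {f : G →* H} (hf : Function.Injective f)
    [f.range.FiniteIndex] : finrank ℤ (Additive G) = finrank ℤ (Additive H) := by
  let φ : Additive G →ₗ[ℤ] Additive H := f.toAdditive.toIntLinearMap
  have torsion_quotient : Module.IsTorsion ℤ (Additive H ⧸ LinearMap.range φ) := by
    intro x
    obtain ⟨x, rfl⟩ := (LinearMap.range φ).mkQ_surjective x
    refine ⟨⟨f.range.index, mem_nonZeroDivisors_of_ne_zero
      (Nat.cast_ne_zero.mpr Subgroup.FiniteIndex.index_ne_zero)⟩,
      (Submodule.Quotient.mk_eq_zero _).mpr ?_⟩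
    obtain ⟨g, hg⟩ := f.range.pow_index_mem x.toMul
    exact ⟨.ofMul g, by simpa [φ, Submonoid.smul_def] using congrArg Additive.ofMul hg⟩
  have rank_nullity := (LinearMap.range φ).finrank_quotient_add_finrank
  rwa [torsion_quotient.finrank_eq_zero, zero_add,
    LinearMap.finrank_range_of_inj (f := φ) hf] at rank_nullity

theorem mem_range_unitsMap_iff {M N : Type*} [Monoid M] [Monoid N] {f : M →* N}
    (hf : Function.Injective f) {u : Nˣ} :
    u ∈ (Units.map f).range ↔ (u : N) ∈ MonoidHom.mrange f ∧ (↑u⁻¹ : N) ∈ MonoidHom.mrange f := by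
  constructor
  · rintro ⟨v, rfl⟩
    exact ⟨⟨v, rfl⟩, ⟨↑v⁻¹, rfl⟩⟩
  · rintro ⟨⟨x, hx⟩, ⟨y, hy⟩⟩
    exact ⟨⟨x, y, hf (by simp [hx, hy]), hf (by simp [hx, hy])⟩, Units.ext hx⟩

theorem finiteIndex_range_unitsMap_of_ideal_subset_range {R S : Type*} [Ring R]
    [CommRing S] {f : R →+* S} (hf : Function.Injective f) {I : Ideal S} [Finite (S ⧸ I)]
    (hI : (I : Set S) ⊆ f.range) :
    (Units.map (f : R →* S)).range.FiniteIndex := by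
  let reduction : Sˣ →* (S ⧸ I)ˣ := Units.map (Ideal.Quotient.mk I)
  have mem_of_congr_one : ∀ u ∈ reduction.ker, (u : S) ∈ f.range := by
    intro u hu
    have : (u : S) - 1 ∈ I := Ideal.Quotient.eq.mp (congrArg Units.val (MonoidHom.mem_ker.mp hu))
    simpa using add_mem (hI this) (one_mem f.range)
  refine Subgroup.finiteIndex_of_le (H := reduction.ker) fun u hu ↦ ?_
  exact (mem_range_unitsMap_iff hf).mpr ⟨mem_of_congr_one u hu, mem_of_congr_one u⁻¹ (inv_mem hu)⟩

/-- `R` is an order in the number field `K`: it consists of algebraic integers and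
spans `K` over `ℚ`. The latter is encoded as: every element of `K` has a nonzero integer multiple
in `R`. -/
structure IsOrder {K : Type*} [Field K] (R : Subring K) : Prop where
  isIntegral : ∀ x ∈ R, IsIntegral ℤ x
  exists_zsmul_mem : ∀ x : K, ∃ N : ℤ, N ≠ 0 ∧ N • x ∈ R

namespace IsOrder

variable {K : Type u} [Field K] {R : Subring K}

/-- The inclusion of an order into the ring of integers, the maximal order. -/
noncomputable def toRingOfIntegers (hR : IsOrder R) : R →+* 𝓞 K :=
  R.subtype.codRestrict (integralClosure ℤ K) fun x ↦ hR.isIntegral x x.2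

theorem toRingOfIntegers_injective (hR : IsOrder R) : Function.Injective hR.toRingOfIntegers :=
  fun _ _ h ↦ Subtype.ext (congrArg (algebraMap (𝓞 K) K) h)

theorem mem_range_toRingOfIntegers_iff (hR : IsOrder R) {x : 𝓞 K} :
    x ∈ hR.toRingOfIntegers.range ↔ (x : K) ∈ R :=
  ⟨by rintro ⟨y, rfl⟩; exact y.2, fun hx ↦ ⟨⟨x, hx⟩, RingOfIntegers.ext rfl⟩⟩

variable [NumberField K]

theorem finiteIndex_range_toRingOfIntegers (hR : IsOrder R) :
    hR.toRingOfIntegers.range.toAddSubgroup.FiniteIndex := by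
  let L := hR.toRingOfIntegers.range.toAddSubgroup.toIntSubmodule
  have torsion_quotient : Module.IsTorsion ℤ (𝓞 K ⧸ L) := by
    intro x
    obtain ⟨x, rfl⟩ := L.mkQ_surjective x
    obtain ⟨N, hN, hNx⟩ := hR.exists_zsmul_mem x
    refine ⟨⟨N, mem_nonZeroDivisors_of_ne_zero hN⟩, (Submodule.Quotient.mk_eq_zero L).mpr ?_⟩
    exact hR.mem_range_toRingOfIntegers_iff.mpr (by simpa using hNx)
  have : Finite (𝓞 K ⧸ L) := Module.finite_of_fg_torsion _ torsion_quotient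
  exact @AddSubgroup.finiteIndex_of_finite_quotient _ _ hR.toRingOfIntegers.range.toAddSubgroup this

theorem finiteIndex_range_unitsMap (hR : IsOrder R) :
    (Units.map (hR.toRingOfIntegers : R →* 𝓞 K)).range.FiniteIndex := by
  let A := hR.toRingOfIntegers.range.toAddSubgroup
  have : A.FiniteIndex := hR.finiteIndex_range_toRingOfIntegers
  have index_ne_zero : (A.index : 𝓞 K) ≠ 0 := Nat.cast_ne_zero.mpr this.index_ne_zero
  have : Finite (𝓞 K ⧸ Ideal.span {(A.index : 𝓞 K)}) :=
    Ideal.finiteQuotientOfFreeOfNeBot _ (by simpa using index_ne_zero)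
  refine finiteIndex_range_unitsMap_of_ideal_subset_range (I := Ideal.span {(A.index : 𝓞 K)})
    hR.toRingOfIntegers_injective fun x hx ↦ ?_
  obtain ⟨y, rfl⟩ := Ideal.mem_span_singleton'.mp hx
  have := A.nsmul_index_mem y
  rwa [nsmul_eq_mul, mul_comm] at this

theorem exists_units_mulEquiv (hR : IsOrder R) :
    ∃ (F : Type u) (_ : CommGroup F) (_ : Fintype F),
      Nonempty (Rˣ ≃* F × Multiplicative (Fin (Units.rank K) → ℤ)) := by
  let f : Rˣ →* (𝓞 K)ˣ := Units.map hR.toRingOfIntegers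
  have f_injective : Function.Injective f := Units.map_injective hR.toRingOfIntegers_injective
  have : f.range.FiniteIndex := hR.finiteIndex_range_unitsMap
  have : Module.Finite ℤ (Additive Rˣ) :=
    Module.Finite.of_injective f.toAdditive.toIntLinearMap f_injective
  rw [← NumberField.Units.finrank_eq, ← finrank_additive_eq_of_finiteIndex_range f_injective]
  exact exists_mulEquiv_finite_prod Rˣ

end IsOrder

/-- The real complex embeddings of a field are its embeddings into `ℝ`. -/
noncomputable def realEmbeddingEquiv (K : Type*) [Field K] :
    {φ : K →+* ℂ // ComplexEmbedding.IsReal φ} ≃ (K →+* ℝ) where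
  toFun φ := φ.2.embedding
  invFun ψ := ⟨Complex.ofRealHom.comp ψ, by
    rw [ComplexEmbedding.isReal_iff]; ext; simp⟩
  left_inv φ := Subtype.ext <| RingHom.ext φ.2.coe_embedding_apply
  right_inv ψ := RingHom.ext fun x ↦ Complex.ofReal_injective <|
    ComplexEmbedding.IsReal.coe_embedding_apply _ x

theorem nrRealPlaces_adjoinRoot (f : ℚ[X]) [hf : Fact (Irreducible f)] :
    InfinitePlace.nrRealPlaces (AdjoinRoot f) = Multiset.card (f.aroots ℝ) := by
  classical
  have aroots_nodup : (f.aroots ℝ).Nodup := nodup_roots hf.out.separable.map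
  rw [← InfinitePlace.card_real_embeddings, ← Multiset.toFinset_card_of_nodup aroots_nodup,
    ← Nat.card_eq_fintype_card, ← Nat.card_eq_finsetCard]
  exact Nat.card_congr <| (realEmbeddingEquiv _).trans <| (RingHom.equivRatAlgHom _ ℝ).trans <|
    (AdjoinRoot.equiv ℝ ℚ f hf.out.ne_zero).trans <| Equiv.subtypeEquivRight (by simp)

theorem units_rank_adjoinRoot {f : ℚ[X]} [hf : Fact (Irreducible f)] {r c : ℕ}
    (hr : r = Multiset.card (f.aroots ℝ)) (hc : f.natDegree = r + 2 * c) :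
    NumberField.Units.rank (AdjoinRoot f) = r + c - 1 := by
  have real_places := nrRealPlaces_adjoinRoot f
  have degree : finrank ℚ (AdjoinRoot f) = f.natDegree := finrank_quotient_span_eq_natDegree
  have signature := InfinitePlace.card_add_two_mul_card_eq_rank (AdjoinRoot f)
  rw [NumberField.Units.rank, InfinitePlace.card_eq_nrRealPlaces_add_nrComplexPlaces]
  omega

section Commutant

variable {n F : Type*} [Fintype n] [DecidableEq n] [Field F]

theorem mem_range_algHom_of_forall_commute {K : Type*} [Field K] [Algebra F K] [Nonempty n]
    (ι : K →ₐ[F] Matrix n n F) (hK : finrank F K = Fintype.card n) {B : Matrix n n F}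
    (hB : ∀ k, Commute (ι k) B) : B ∈ ι.range := by
  let _ : Module K (n → F) := Module.compHom (n → F)
    (Matrix.toLinAlgEquiv'.toAlgHom.comp ι).toRingHom
  have smul_def (k : K) (v : n → F) : k • v = (ι k).mulVec v := rfl
  have : IsScalarTower F K (n → F) :=
    ⟨fun a k v ↦ by simp only [smul_def, map_smul, Matrix.smul_mulVec]⟩
  have finrank_eq_one : finrank K (n → F) = 1 := by
    have tower := finrank_mul_finrank F K (n → F)
    rw [hK, finrank_fintype_fun_eq_card] at tower
    exact Nat.eq_of_mul_eq_mul_left Fintype.card_pos (tower.trans (mul_one _).symm)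
  let B_K : (n → F) →ₗ[K] (n → F) :=
    { Matrix.mulVecLin B with
      map_smul' k v := by simp [smul_def, (hB k).eq] }
  obtain ⟨k, hk, -⟩ := B_K.existsUnique_eq_smul_id_of_finrank_eq_one finrank_eq_one
  exact ⟨k, Matrix.mulVec_injective (funext fun v ↦ (LinearMap.congr_fun hk v).symm)⟩

/-- The evaluation `F[X]/(χ_A) → Mₙ(F)`, `X ↦ A`, whose image is the subalgebra `F[A]`. -/
noncomputable def adjoinRootCharpolyHom (A : Matrix n n F) :
    AdjoinRoot A.charpoly →ₐ[F] Matrix n n F :=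
  Ideal.Quotient.liftₐ (Ideal.span {A.charpoly}) (aeval A) fun p hp ↦ by
    obtain ⟨q, rfl⟩ := Ideal.mem_span_singleton'.mp hp
    rw [map_mul, Matrix.aeval_self_charpoly, mul_zero]

theorem mem_range_adjoinRootCharpolyHom_iff {A B : Matrix n n F} (hA : Irreducible A.charpoly) :
    B ∈ (adjoinRootCharpolyHom A).range ↔ Commute A B := by
  have commute_aeval {C : Matrix n n F} (hC : Commute A C) (k) :
      Commute (adjoinRootCharpolyHom A k) C := by
    obtain ⟨p, rfl⟩ := AdjoinRoot.mk_surjective k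
    exact (Algebra.commute_of_mem_adjoin_singleton_of_commute
      (aeval_mem_adjoin_singleton F A) hC.symm).symm
  constructor
  · rintro ⟨k, rfl⟩
    exact (commute_aeval (Commute.refl A) k).symm
  · intro hB
    have : Fact (Irreducible A.charpoly) := ⟨hA⟩
    have : Nonempty n := Fintype.card_pos_iff.mp <| A.charpoly_natDegree_eq_dim ▸ hA.natDegree_pos
    refine mem_range_algHom_of_forall_commute _ ?_ (commute_aeval hB)
    rw [← A.charpoly_natDegree_eq_dim]
    exact finrank_quotient_span_eq_natDegree

end Commutant

section MultiplierRing

variable {n K : Type*} [Fintype n] [DecidableEq n] [Field K]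

/-- The inclusion `Mₙ(ℤ) → Mₙ(ℚ)`. -/
abbrev intCastMatrix : Matrix n n ℤ →+* Matrix n n ℚ := (Int.castRingHom ℚ).mapMatrix

theorem intCastMatrix_injective : Function.Injective (intCastMatrix (n := n)) :=
  Matrix.map_injective Int.cast_injective

variable (ι : K →+* Matrix n n ℚ)

/-- The multiplier ring of the lattice `ℤⁿ` under the action `ι` of `K` on `ℚⁿ`: the elements of `K`
that map `ℤⁿ` into itself, that is, those acting by integer matrices. -/
def multiplierRing : Subring K := intCastMatrix.range.comap ι

namespace multiplierRing

theorem isOrder [Nonempty n] : IsOrder (multiplierRing ι) where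
  isIntegral := by
    rintro k ⟨B, hB⟩
    have integral_image : IsIntegral ℤ (ι k) :=
      hB ▸ B.isIntegral.map (intCastMatrix (n := n)).toIntAlgHom
    exact (isIntegral_algHom_iff ι.toIntAlgHom ι.injective).mp integral_image
  exists_zsmul_mem k := by
    obtain ⟨⟨N, hN⟩, entry_integral⟩ := IsLocalization.exist_integer_multiples_of_finite
      (nonZeroDivisors ℤ) fun p : n × n ↦ ι k p.1 p.2
    choose B hB using entry_integral
    refine ⟨N, nonZeroDivisors.ne_zero hN, .of fun i j ↦ B (i, j), ?_⟩
    rw [map_zsmul]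
    ext i j
    exact hB (i, j)

theorem intCastMatrix_map_num (k : multiplierRing ι) :
    intCastMatrix ((ι k).map Rat.num) = ι k := by
  obtain ⟨B, hB⟩ := k.2
  rw [← hB]
  ext
  simp

/-- The action of the multiplier ring on the lattice `ℤⁿ`; the numerators are the matrix entries
themselves, as these are integers. -/
def toIntMatrix : multiplierRing ι →+* Matrix n n ℤ where
  toFun k := (ι k).map Rat.num
  map_zero' := intCastMatrix_injective <| by simp only [intCastMatrix_map_num]; simp
  map_one' := intCastMatrix_injective <| by simp only [intCastMatrix_map_num]; simp
  map_add' x y := intCastMatrix_injective <| by simp only [map_add, intCastMatrix_map_num]; simp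
  map_mul' x y := intCastMatrix_injective <| by simp only [map_mul, intCastMatrix_map_num]; simp

theorem intCastMatrix_toIntMatrix (k : multiplierRing ι) :
    intCastMatrix (toIntMatrix ι k) = ι k :=
  intCastMatrix_map_num ι k

theorem toIntMatrix_injective [Nonempty n] : Function.Injective (toIntMatrix ι) := fun x y h ↦
  Subtype.ext <| ι.injective <| by
    rw [← intCastMatrix_toIntMatrix, ← intCastMatrix_toIntMatrix, h]

theorem mem_range_toIntMatrix_iff {B : Matrix n n ℤ} :
    B ∈ (toIntMatrix ι).range ↔ intCastMatrix B ∈ ι.range := by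
  constructor
  · rintro ⟨k, rfl⟩
    exact ⟨k, (intCastMatrix_toIntMatrix ι k).symm⟩
  · rintro ⟨k, hk⟩
    exact ⟨⟨k, B, hk.symm⟩, intCastMatrix_injective ((intCastMatrix_toIntMatrix ι _).trans hk)⟩

variable {ι}

theorem range_unitsMap_toIntMatrix [Nonempty n] {A : GL n ℤ}
    (hι : ∀ B, B ∈ ι.range ↔ Commute (intCastMatrix (A : Matrix n n ℤ)) B) :
    (Units.map (toIntMatrix ι : multiplierRing ι →* Matrix n n ℤ)).range =
      Subgroup.centralizer {A} := by
  have mem_range_iff (B : Matrix n n ℤ) :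
      B ∈ (toIntMatrix ι).range ↔ Commute (A : Matrix n n ℤ) B := by
    rw [mem_range_toIntMatrix_iff, hι, commute_map_iff intCastMatrix_injective]
  ext B
  calc
    B ∈ (Units.map (toIntMatrix ι : multiplierRing ι →* Matrix n n ℤ)).range
      ↔ (B : Matrix n n ℤ) ∈ (toIntMatrix ι).range ∧
          (↑B⁻¹ : Matrix n n ℤ) ∈ (toIntMatrix ι).range :=
        mem_range_unitsMap_iff (toIntMatrix_injective ι)
    _ ↔ Commute (A : Matrix n n ℤ) B := by
        rw [mem_range_iff, mem_range_iff, Commute.units_inv_right_iff, and_self]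
    _ ↔ B ∈ Subgroup.centralizer {A} := by
        rw [Subgroup.mem_centralizer_singleton_iff, Commute.units_val_iff, commute_iff_eq, eq_comm]

theorem nonempty_units_mulEquiv_centralizer [Nonempty n] {A : GL n ℤ}
    (hι : ∀ B, B ∈ ι.range ↔ Commute (intCastMatrix (A : Matrix n n ℤ)) B) :
    Nonempty ((multiplierRing ι)ˣ ≃* Subgroup.centralizer {A}) :=
  ⟨(MonoidHom.ofInjective (Units.map_injective (toIntMatrix_injective ι))).trans
    (MulEquiv.subgroupCongr (range_unitsMap_toIntMatrix hι))⟩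

end multiplierRing

end MultiplierRing

theorem stmt_5_general {n : Type*} [Fintype n] [DecidableEq n] (A : GL n ℤ)
    (hirr : Irreducible ((A : Matrix n n ℤ).charpoly.map (Int.castRingHom ℚ))) (r c : ℕ)
    (hr : r = Multiset.card (((A : Matrix n n ℤ).charpoly.map (Int.castRingHom ℝ)).roots))
    (hc : Fintype.card n = r + 2 * c) :
    ∃ (F : Type) (_ : CommGroup F) (_ : Fintype F),
      Nonempty ((Subgroup.centralizer {A}) ≃* F × Multiplicative (Fin (r + c - 1) → ℤ)) := by
  let A_ℚ : Matrix n n ℚ := intCastMatrix (A : Matrix n n ℤ)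
  have charpoly_A_ℚ : A_ℚ.charpoly = (A : Matrix n n ℤ).charpoly.map (Int.castRingHom ℚ) :=
    Matrix.charpoly_map _ _
  rw [← charpoly_A_ℚ] at hirr
  have : Fact (Irreducible A_ℚ.charpoly) := ⟨hirr⟩
  have : Nonempty n :=
    Fintype.card_pos_iff.mp <| A_ℚ.charpoly_natDegree_eq_dim ▸ hirr.natDegree_pos
  let ι : AdjoinRoot A_ℚ.charpoly →+* Matrix n n ℚ := adjoinRootCharpolyHom A_ℚ
  obtain ⟨centralizer_equiv⟩ :=
    multiplierRing.nonempty_units_mulEquiv_centralizer (ι := ι) (A := A) fun _ ↦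
      mem_range_adjoinRootCharpolyHom_iff hirr
  obtain ⟨F, commGroup_F, fintype_F, ⟨unit_equiv⟩⟩ :=
    (multiplierRing.isOrder ι).exists_units_mulEquiv
  have rank_eq : Units.rank (AdjoinRoot A_ℚ.charpoly) = r + c - 1 :=
    units_rank_adjoinRoot
      (by rw [hr, charpoly_A_ℚ, aroots, Polynomial.map_map]; congr)
      (by rw [A_ℚ.charpoly_natDegree_eq_dim, hc])
  rw [rank_eq] at unit_equiv
  exact ⟨F, commGroup_F, fintype_F, ⟨centralizer_equiv.symm.trans unit_equiv⟩⟩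

/-- Let `A ∈ GL(m, ℤ)` with irreducible characteristic polynomial over `ℚ`,
having `r` real eigenvalues and `2c` non-real complex eigenvalues (`m = r + 2c`).
Then the centralizer of `A` in `GL(m, ℤ)` is an abelian group isomorphic to
`F × ℤ^(r+c-1)` for some finite (abelian) group `F`. -/
theorem stmt_5 (m : ℕ) (A : GL (Fin m) ℤ)
    (hirr : Irreducible (((A : Matrix (Fin m) (Fin m) ℤ)).charpoly.map (Int.castRingHom ℚ)))
    (r c : ℕ)
    (hr : r = Multiset.card
      (((A : Matrix (Fin m) (Fin m) ℤ).charpoly.map (Int.castRingHom ℝ)).roots))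
    (hc : m = r + 2 * c) :
    ∃ (F : Type) (_ : CommGroup F) (_ : Fintype F),
      Nonempty ((Subgroup.centralizer {A}) ≃* F × Multiplicative (Fin (r + c - 1) → ℤ)) :=
  stmt_5_general A hirr r c hr (by rw [Fintype.card_fin, hc])
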